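/- (Reduced equation for the rolling disc via the d'Alembert principle.) Let m, r, I, g > 0 and let a : ℝ → ℝ be smooth with a(t) > 0. Consider on ℝ²{φ,ψ} the Lagrangian L(φ,ψ,φ̇,ψ̇,t) = ½(m r² a(t)² φ̇² + I ψ̇²) − m g r a(t) sin φ with the affine constraint ψ̇ = a(t)φ̇ and virtual displacements 𝒟_t = {(η_φ,η_ψ) : η_ψ = a(t)η_φ}. Then a twice-differentiable admissible curve (φ(t),ψ(t)) with ψ̇(t) = a(t)φ̇(t) satisfies the d'Alembert principle (∂L/∂φ − (d/dt)(∂L/∂φ̇))η_φ + (∂L/∂ψ − (d/dt)(∂L/∂ψ̇))η_ψ = 0 for all (η_φ,η_ψ) ∈ 𝒟_t if and only if φ satisfies (mr²+I)a(t)²φ̈ + 2(mr²+I)a(t)ȧ(t)φ̇ = −mrg a(t) cos φ + I a(t)ȧ(t)φ̇ for all t. -/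

import Mathlib

open scoped ContDiff

/-- The Lagrangian of the balanced disc rolling over a vertical circle of variable radius,
`L(φ,ψ,φ̇,ψ̇,t) = ½(mr²a(t)²φ̇² + Iψ̇²) − mgr a(t) sin φ`, where `a(t) = (R(t)+r)/r`. -/
noncomputable def discLag (m r I g : ℝ) (a : ℝ → ℝ) (p q v w t : ℝ) : ℝ :=
  (1 / 2) * (m * r ^ 2 * a t ^ 2 * v ^ 2 + I * w ^ 2) - m * g * r * a t * Real.sin p

/-- The Euler–Lagrange expression `∂L/∂x − (d/dt)(∂L/∂ẋ)` of a Lagrangian `L x ẋ t` with one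
degree of freedom, along the curve `x`. For several degrees of freedom it gives the component in
one coordinate when the other coordinates and velocities, evaluated along the curve, are absorbed
into the dependence of `L` on `t`. -/
noncomputable def eulerLagrange (L : ℝ → ℝ → ℝ → ℝ) (x : ℝ → ℝ) (t : ℝ) : ℝ :=
  deriv (fun p => L p (deriv x t) t) (x t)
    - deriv (fun s => deriv (fun v => L (x s) v s) (deriv x s)) t

theorem eulerLagrange_kinetic_sub_potential (μ : ℝ → ℝ) (U : ℝ → ℝ → ℝ) (x : ℝ → ℝ) (t : ℝ) :
    eulerLagrange (fun p v s => 1 / 2 * (μ s * v ^ 2) - U p s) x t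
      = -deriv (fun p => U p t) (x t) - deriv (fun s => μ s * deriv x s) t := by
  have momentum (s : ℝ) :
      deriv (fun v => 1 / 2 * (μ s * v ^ 2) - U (x s) s) (deriv x s) = μ s * deriv x s := by
    simp only [deriv_sub_const_fun, deriv_const_mul_field', deriv_pow_field]
    ring
  simp only [eulerLagrange, momentum, deriv_const_sub]

section discLag

variable (m r I g : ℝ) {a : ℝ → ℝ} (φ ψ : ℝ → ℝ) {t : ℝ}

theorem eulerLagrange_discLag_position {a' φ'' : ℝ} (ha : HasDerivAt a a' t)
    (hφ : HasDerivAt (deriv φ) φ'' t) :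
    eulerLagrange (fun p v s => discLag m r I g a p (ψ s) v (deriv ψ s) s) φ t
      = -(m * g * r * a t * Real.cos (φ t))
        - m * r ^ 2 * (2 * a t * a' * deriv φ t + a t ^ 2 * φ'') := by
  have split_energy : (fun p v s => discLag m r I g a p (ψ s) v (deriv ψ s) s) = fun p v s =>
      1 / 2 * (m * r ^ 2 * a s ^ 2 * v ^ 2)
        - (m * g * r * a s * Real.sin p - 1 / 2 * (I * deriv ψ s ^ 2)) := by
    funext p v s
    unfold discLag
    ring
  have force : HasDerivAt (fun p => m * g * r * a t * Real.sin p - 1 / 2 * (I * deriv ψ t ^ 2))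
      (m * g * r * a t * Real.cos (φ t)) (φ t) :=
    ((Real.hasDerivAt_sin (φ t)).const_mul _).sub_const _
  have momentum_rate : HasDerivAt (fun s => m * r ^ 2 * a s ^ 2 * deriv φ s)
      (m * r ^ 2 * (2 * a t * a' * deriv φ t + a t ^ 2 * φ'')) t := by
    refine (((ha.fun_pow 2).const_mul (m * r ^ 2)).fun_mul hφ).congr_deriv ?_
    push_cast
    ring
  rw [split_energy, eulerLagrange_kinetic_sub_potential, force.deriv, momentum_rate.deriv]

theorem eulerLagrange_discLag_rotation {ψ'' : ℝ} (hψ : HasDerivAt (deriv ψ) ψ'' t) :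
    eulerLagrange (fun q w s => discLag m r I g a (φ s) q (deriv φ s) w s) ψ t = -(I * ψ'') := by
  have split_energy : (fun q w s => discLag m r I g a (φ s) q (deriv φ s) w s) = fun _ w s =>
      1 / 2 * (I * w ^ 2)
        - (m * g * r * a s * Real.sin (φ s)
          - 1 / 2 * (m * r ^ 2 * a s ^ 2 * deriv φ s ^ 2)) := by
    funext q w s
    unfold discLag
    ring
  rw [split_energy, eulerLagrange_kinetic_sub_potential (fun _ => I), deriv_const,
    (hψ.const_mul I).deriv, neg_zero, zero_sub]

end discLag

theorem forall_eq_mul_imp_mul_add_mul_eq_zero_iff {R : Type*} [CommSemiring R] {c A B : R} :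
    (∀ x y : R, y = c * x → A * x + B * y = 0) ↔ A + c * B = 0 := by
  constructor
  · intro h
    simpa [mul_comm] using h 1 c (mul_one c).symm
  · rintro h x _ rfl
    calc A * x + B * (c * x) = (A + c * B) * x := by ring
      _ = 0 := by rw [h, zero_mul]

/-- The virtual displacements at time `t` are the multiples of `(1, a t)`, so the principle is the
single equation `E_φ + a E_ψ = 0` between the Euler–Lagrange expressions. Differentiating the
constraint gives `ψ̈ = ȧ φ̇ + a φ̈`, which eliminates `ψ` from it. -/
theorem rolling_disc_dalembert_iff_reduced_equation_general
    (m r I g : ℝ) {a a' φ φ' φ'' ψ : ℝ → ℝ}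
    (ha : ∀ t, HasDerivAt a (a' t) t)
    (hφ : ∀ t, HasDerivAt φ (φ' t) t) (hφ' : ∀ t, HasDerivAt φ' (φ'' t) t)
    (hψ : ∀ t, HasDerivAt ψ (a t * φ' t) t) :
    (∀ t, ∀ ηφ ηψ : ℝ, ηψ = a t * ηφ →
      eulerLagrange (fun p v s => discLag m r I g a p (ψ s) v (deriv ψ s) s) φ t * ηφ
        + eulerLagrange (fun q w s => discLag m r I g a (φ s) q (deriv φ s) w s) ψ t * ηψ = 0)
    ↔
    (∀ t, (m * r ^ 2 + I) * a t ^ 2 * φ'' t + 2 * (m * r ^ 2 + I) * a t * a' t * φ' t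
      = -(m * r * g * a t * Real.cos (φ t)) + I * a t * a' t * φ' t) := by
  obtain rfl : deriv φ = φ' := deriv_eq hφ
  have hψ' (t : ℝ) : HasDerivAt (deriv ψ) (a' t * deriv φ t + a t * φ'' t) t := by
    rw [deriv_eq hψ]
    exact (ha t).fun_mul (hφ' t)
  refine forall_congr' fun t => ?_
  rw [forall_eq_mul_imp_mul_add_mul_eq_zero_iff,
    eulerLagrange_discLag_position m r I g φ ψ (ha t) (hφ' t),
    eulerLagrange_discLag_rotation m r I g φ ψ (hψ' t)]
  constructor <;> intro h <;> linear_combination -h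

/-- Reduced equation for the rolling disc via the d'Alembert principle: an admissible
curve `(φ(t), ψ(t))` (with `ψ̇ = a(t)φ̇`) satisfies
`(∂L/∂φ − (d/dt)(∂L/∂φ̇))η_φ + (∂L/∂ψ − (d/dt)(∂L/∂ψ̇))η_ψ = 0` for all virtual
displacements `η_ψ = a(t)η_φ` if and only if `φ` satisfies the reduced equation
`(mr²+I)a²φ̈ + 2(mr²+I)aȧφ̇ = −mrg a cos φ + Iaȧφ̇`. -/
theorem rolling_disc_dalembert_iff_reduced_equation
    (m r I g : ℝ) (hm : 0 < m) (hr : 0 < r) (hI : 0 < I) (hg : 0 < g)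
    (a : ℝ → ℝ) (ha : ContDiff ℝ ∞ a) (hapos : ∀ t, 0 < a t)
    (φ ψ : ℝ → ℝ)
    (hφ1 : Differentiable ℝ φ) (hφ2 : Differentiable ℝ (deriv φ))
    (hψ1 : Differentiable ℝ ψ) (hψ2 : Differentiable ℝ (deriv ψ))
    -- the curve is admissible: `ψ̇ = a(t) φ̇`
    (hadm : ∀ t, deriv ψ t = a t * deriv φ t) :
    (∀ t, ∀ ηφ ηψ : ℝ, ηψ = a t * ηφ →
      (deriv (fun p => discLag m r I g a p (ψ t) (deriv φ t) (deriv ψ t) t) (φ t)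
        - deriv (fun s =>
            deriv (fun v => discLag m r I g a (φ s) (ψ s) v (deriv ψ s) s)
              (deriv φ s)) t) * ηφ
      + (deriv (fun q => discLag m r I g a (φ t) q (deriv φ t) (deriv ψ t) t) (ψ t)
        - deriv (fun s =>
            deriv (fun w => discLag m r I g a (φ s) (ψ s) (deriv φ s) w s)
              (deriv ψ s)) t) * ηψ = 0)
    ↔
    (∀ t, (m * r ^ 2 + I) * a t ^ 2 * deriv (deriv φ) t
        + 2 * (m * r ^ 2 + I) * a t * deriv a t * deriv φ t
      = -(m * r * g * a t * Real.cos (φ t)) + I * a t * deriv a t * deriv φ t) :=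
  rolling_disc_dalembert_iff_reduced_equation_general m r I g
    (fun t => (ha.differentiable (by simp) t).hasDerivAt) (fun t => (hφ1 t).hasDerivAt)
    (fun t => (hφ2 t).hasDerivAt) (fun t => hadm t ▸ (hψ1 t).hasDerivAt)
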